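/- Fix positive reals a₀, b₀, a nonnegative real τ, a positive integer L, an M-by-N complex matrix H, and an M-by-L complex matrix Y. Define the cost 𝓛(z, β) = L·log det(Σ(z,β)) + tr(Y^* Σ(z,β)^{-1} Y) + R(z, β) + τ ‖D z‖₁, where Σ(z,β) = e^β I_M + H diag(e^{z}) H^* and R(z, β) = ∑_{n=1}^N ((a₀+1) z_n + b₀ e^{-z_n}) + (a₀+1) β + b₀ e^{-β}. Fix (z⁰, β⁰) ∈ ℝ^N × ℝ and let Θ = e^{-β⁰} (e^{-β⁰} H^* H + diag(e^{-z⁰}))^{-1} H^* Y. Define the surrogate g(z, β) = L·log det(Σ(z,β)) + e^{-β} ‖Y − H Θ‖_F^2 + tr(Θ^* diag(e^{-z}) Θ) + R(z, β) + τ ‖D z‖₁. Then g(z, β) ≥ 𝓛(z, β) for all (z, β) ∈ ℝ^N × ℝ, and g(z⁰, β⁰) = 𝓛(z⁰, β⁰). -/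

import Mathlib

open Matrix

/-- `‖D z‖₁ = ∑_{n=2}^N |z_n − z_{n-1}|`, the total variation of `z ∈ ℝ^N`,
where `D` is the `(N−1) × N` first-order difference matrix. -/
noncomputable def tvNorm {N : ℕ} (z : Fin N → ℝ) : ℝ :=
  ∑ i : Fin (N - 1),
    |z ⟨i.val + 1, by have := i.isLt; omega⟩ - z ⟨i.val, by have := i.isLt; omega⟩|

/-!
For fixed `(z, β)`, the posterior precision of the linear model is
`A = e^{-β} Hᴴ H + diag(e^{-z})`. Completing the square in `T` and applying the Woodbury identity
to `Σ(z, β)` gives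
`e^{-β} (Y - H T)ᴴ (Y - H T) + Tᴴ diag(e^{-z}) T = Yᴴ Σ(z, β)⁻¹ Y + (T - T₀)ᴴ A (T - T₀)`,
where `T₀ = e^{-β} A⁻¹ Hᴴ Y`. Thus `tr (Yᴴ Σ⁻¹ Y)` is the minimum over `T` of the trace of the
left-hand side. The surrogate freezes `T` at the minimizer `Θ` for `(z⁰, β⁰)`, which can only
increase the value at other parameters and leaves it unchanged at `(z⁰, β⁰)`.
-/

section RegularizedLoss

variable {R m n l : Type*} [CommRing R] [StarRing R] [Fintype m]

/-- The precision matrix `Hᴴ W H + V` of the posterior of `X` in the linear model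
`Y = H X + noise`, with noise precision `W` and prior precision `V`. -/
def posteriorPrecision (H : Matrix m n R) (W : Matrix m m R) (V : Matrix n n R) : Matrix n n R :=
  Hᴴ * W * H + V

lemma posteriorPrecision_isHermitian {H : Matrix m n R} {W : Matrix m m R} {V : Matrix n n R}
    (hW : W.IsHermitian) (hV : V.IsHermitian) : (posteriorPrecision H W V).IsHermitian :=
  (isHermitian_conjTranspose_mul_mul H hW).add hV

variable [Fintype n]

/-- The posterior mean of `X` in the linear model `Y = H X + noise`, with noise precision `W` and
prior precision `V`; it is only meaningful when the posterior precision is invertible. -/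
noncomputable def posteriorMean [DecidableEq n] (H : Matrix m n R) (W : Matrix m m R)
    (V : Matrix n n R) (Y : Matrix m l R) : Matrix n l R :=
  (posteriorPrecision H W V)⁻¹ * (Hᴴ * W * Y)

/-- The matrix-valued regularized least-squares loss of `T` in the linear model
`Y = H T + noise`, with noise precision `W` and prior precision `V`. -/
def regularizedLoss (H : Matrix m n R) (W : Matrix m m R) (V : Matrix n n R) (Y : Matrix m l R)
    (T : Matrix n l R) : Matrix l l R :=
  (Y - H * T)ᴴ * W * (Y - H * T) + Tᴴ * V * T

lemma conjTranspose_sub_inv_mul_mul_sub_inv_mul [DecidableEq n] {A : Matrix n n R}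
    (hA : A.IsHermitian) (hAu : IsUnit A) (G T : Matrix n l R) :
    (T - A⁻¹ * G)ᴴ * A * (T - A⁻¹ * G) = Tᴴ * A * T - Tᴴ * G - Gᴴ * T + Gᴴ * A⁻¹ * G := by
  have hdet : IsUnit A.det := (isUnit_iff_isUnit_det A).1 hAu
  have hleft : (T - A⁻¹ * G)ᴴ * A = Tᴴ * A - Gᴴ := by
    rw [conjTranspose_sub, conjTranspose_mul, hA.inv.eq, Matrix.sub_mul,
      nonsing_inv_mul_cancel_right _ _ hdet]
  have hcancel : Tᴴ * A * (A⁻¹ * G) = Tᴴ * G := by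
    rw [Matrix.mul_assoc, mul_nonsing_inv_cancel_left _ _ hdet]
  rw [hleft, Matrix.mul_sub, Matrix.sub_mul, Matrix.sub_mul, hcancel, Matrix.mul_assoc Gᴴ]
  abel

lemma inv_inv_add_mul_inv_mul_conjTranspose [DecidableEq m] [DecidableEq n] {H : Matrix m n R}
    {W : Matrix m m R} {V : Matrix n n R} (hW : IsUnit W) (hV : IsUnit V)
    (hA : IsUnit (posteriorPrecision H W V)) :
    (W⁻¹ + H * V⁻¹ * Hᴴ)⁻¹ = W - W * H * (posteriorPrecision H W V)⁻¹ * Hᴴ * W := by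
  have hWW : W⁻¹⁻¹ = W := nonsing_inv_nonsing_inv W ((isUnit_iff_isUnit_det W).1 hW)
  have hVV : V⁻¹⁻¹ = V := nonsing_inv_nonsing_inv V ((isUnit_iff_isUnit_det V).1 hV)
  have hAW : V⁻¹⁻¹ + Hᴴ * W⁻¹⁻¹ * H = posteriorPrecision H W V := by
    rw [hVV, hWW, add_comm, posteriorPrecision]
  rw [add_mul_mul_inv_eq_sub _ _ _ _ (isUnit_nonsing_inv_iff.2 hW) (isUnit_nonsing_inv_iff.2 hV)
    (hAW ▸ hA), hAW, hWW]

theorem regularizedLoss_eq_add [DecidableEq m] [DecidableEq n] {H : Matrix m n R}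
    {W : Matrix m m R} {V : Matrix n n R} (hW : W.IsHermitian) (hWu : IsUnit W)
    (hV : V.IsHermitian) (hVu : IsUnit V) (hAu : IsUnit (posteriorPrecision H W V))
    (Y : Matrix m l R) (T : Matrix n l R) :
    regularizedLoss H W V Y T = Yᴴ * (W⁻¹ + H * V⁻¹ * Hᴴ)⁻¹ * Y +
      (T - posteriorMean H W V Y)ᴴ * posteriorPrecision H W V * (T - posteriorMean H W V Y) := by
  rw [posteriorMean,
    conjTranspose_sub_inv_mul_mul_sub_inv_mul (posteriorPrecision_isHermitian hW hV) hAu,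
    inv_inv_add_mul_inv_mul_conjTranspose hWu hVu hAu]
  generalize (posteriorPrecision H W V)⁻¹ = B
  simp only [regularizedLoss, posteriorPrecision, conjTranspose_sub, conjTranspose_mul,
    conjTranspose_conjTranspose, hW.eq, Matrix.mul_sub, Matrix.sub_mul, Matrix.mul_add,
    Matrix.add_mul, Matrix.mul_assoc]
  abel

lemma posteriorMean_smul_one [DecidableEq m] [DecidableEq n] (H : Matrix m n R) (c : R)
    (V : Matrix n n R) (Y : Matrix m l R) :
    posteriorMean H (c • 1) V Y = c • ((c • (Hᴴ * H) + V)⁻¹ * (Hᴴ * Y)) := by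
  simp only [posteriorMean, posteriorPrecision, Matrix.mul_smul, Matrix.smul_mul, Matrix.mul_one]

lemma trace_regularizedLoss_smul_one [DecidableEq m] [Fintype l] (H : Matrix m n R) (c : R)
    (V : Matrix n n R) (Y : Matrix m l R) (T : Matrix n l R) :
    trace (regularizedLoss H (c • 1) V Y T) =
      c * trace ((Y - H * T)ᴴ * (Y - H * T)) + trace (Tᴴ * V * T) := by
  rw [regularizedLoss, Matrix.mul_smul, Matrix.mul_one, Matrix.smul_mul, trace_add, trace_smul,
    smul_eq_mul]

end RegularizedLoss

section PosDef

open scoped ComplexOrder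

variable {𝕜 m n l : Type*} [RCLike 𝕜] [Fintype m]
  {H : Matrix m n 𝕜} {W : Matrix m m 𝕜} {V : Matrix n n 𝕜}

lemma posteriorPrecision_posDef [Finite n] (hW : W.PosSemidef) (hV : V.PosDef) :
    (posteriorPrecision H W V).PosDef :=
  .posSemidef_add (hW.conjTranspose_mul_mul_same H) hV

variable [DecidableEq m] [Fintype n] [DecidableEq n]

theorem posSemidef_regularizedLoss_sub [Finite l] (hW : W.PosDef) (hV : V.PosDef)
    (Y : Matrix m l 𝕜) (T : Matrix n l 𝕜) :
    (regularizedLoss H W V Y T - Yᴴ * (W⁻¹ + H * V⁻¹ * Hᴴ)⁻¹ * Y).PosSemidef := by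
  have hA : (posteriorPrecision H W V).PosDef := posteriorPrecision_posDef hW.posSemidef hV
  rw [regularizedLoss_eq_add hW.isHermitian hW.isUnit hV.isHermitian hV.isUnit hA.isUnit,
    add_sub_cancel_left]
  exact hA.posSemidef.conjTranspose_mul_mul_same _

theorem regularizedLoss_posteriorMean (hW : W.PosDef) (hV : V.PosDef) (Y : Matrix m l 𝕜) :
    regularizedLoss H W V Y (posteriorMean H W V Y) = Yᴴ * (W⁻¹ + H * V⁻¹ * Hᴴ)⁻¹ * Y := by
  have hA : (posteriorPrecision H W V).PosDef := posteriorPrecision_posDef hW.posSemidef hV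
  rw [regularizedLoss_eq_add hW.isHermitian hW.isUnit hV.isHermitian hV.isUnit hA.isUnit,
    sub_self, Matrix.mul_zero, add_zero]

theorem re_trace_le_re_trace_regularizedLoss [Fintype l] (hW : W.PosDef) (hV : V.PosDef)
    (Y : Matrix m l 𝕜) (T : Matrix n l 𝕜) :
    RCLike.re (trace (Yᴴ * (W⁻¹ + H * V⁻¹ * Hᴴ)⁻¹ * Y)) ≤
      RCLike.re (trace (regularizedLoss H W V Y T)) := by
  have hnonneg := (posSemidef_regularizedLoss_sub (H := H) hW hV Y T).trace_nonneg
  rw [trace_sub, sub_nonneg] at hnonneg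
  exact (RCLike.le_iff_re_im.1 hnonneg).1

end PosDef

section ExponentialParameters

open scoped ComplexOrder

variable {𝕜 m n l : Type*} [RCLike 𝕜] [DecidableEq m] [DecidableEq n]

lemma posDef_diagonal_exp (z : n → ℝ) : (diagonal fun i => (Real.exp (z i) : 𝕜)).PosDef :=
  .diagonal fun i => RCLike.ofReal_pos.2 (Real.exp_pos (z i))

variable [Fintype m] [Fintype n]

lemma inv_diagonal_exp_neg (z : n → ℝ) :
    (diagonal fun i => (Real.exp (-z i) : 𝕜))⁻¹ = diagonal fun i => (Real.exp (z i) : 𝕜) :=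
  inv_eq_left_inv <| by simp [diagonal_mul_diagonal, ← RCLike.ofReal_mul, ← Real.exp_add]

lemma inv_exp_neg_smul_one (β : ℝ) :
    ((Real.exp (-β) : 𝕜) • (1 : Matrix m m 𝕜))⁻¹ = (Real.exp β : 𝕜) • (1 : Matrix m m 𝕜) := by
  simpa only [smul_one_eq_diagonal] using inv_diagonal_exp_neg fun _ : m => β

theorem surrogate_majorizes_general [Fintype l] (H : Matrix m n 𝕜) (Y : Matrix m l 𝕜)
    (f : (n → ℝ) → ℝ → ℝ) (z0 : n → ℝ) (β0 : ℝ) :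
    let Sig : (n → ℝ) → ℝ → Matrix m m 𝕜 := fun z β =>
      (Real.exp β : 𝕜) • 1 + H * diagonal (fun i => (Real.exp (z i) : 𝕜)) * Hᴴ
    let cost : (n → ℝ) → ℝ → ℝ := fun z β =>
      RCLike.re (trace (Yᴴ * (Sig z β)⁻¹ * Y)) + f z β
    let Θ : Matrix n l 𝕜 :=
      (Real.exp (-β0) : 𝕜) • (((Real.exp (-β0) : 𝕜) • (Hᴴ * H) +
        diagonal (fun i => (Real.exp (-z0 i) : 𝕜)))⁻¹ * (Hᴴ * Y))
    let g : (n → ℝ) → ℝ → ℝ := fun z β =>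
      Real.exp (-β) * RCLike.re (trace ((Y - H * Θ)ᴴ * (Y - H * Θ))) +
        RCLike.re (trace (Θᴴ * diagonal (fun i => (Real.exp (-z i) : 𝕜)) * Θ)) + f z β
    (∀ z β, cost z β ≤ g z β) ∧ g z0 β0 = cost z0 β0 := by
  intro Sig cost Θ g
  let W (β : ℝ) : Matrix m m 𝕜 := (Real.exp (-β) : 𝕜) • 1
  let V (z : n → ℝ) : Matrix n n 𝕜 := diagonal fun i => (Real.exp (-z i) : 𝕜)
  have hW (β : ℝ) : (W β).PosDef := PosDef.one.smul (RCLike.ofReal_pos.2 (Real.exp_pos _))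
  have hV (z : n → ℝ) : (V z).PosDef := posDef_diagonal_exp (-z)
  have hSig (z : n → ℝ) (β : ℝ) : (W β)⁻¹ + H * (V z)⁻¹ * Hᴴ = Sig z β := by
    simp only [W, V, Sig, inv_exp_neg_smul_one, inv_diagonal_exp_neg]
  have hΘ : posteriorMean H (W β0) (V z0) Y = Θ := posteriorMean_smul_one ..
  have hg (z : n → ℝ) (β : ℝ) :
      g z β = RCLike.re (trace (regularizedLoss H (W β) (V z) Y Θ)) + f z β := by
    rw [trace_regularizedLoss_smul_one, map_add, RCLike.re_ofReal_mul]
  constructor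
  · intro z β
    rw [hg]
    exact add_le_add_left (hSig z β ▸ re_trace_le_re_trace_regularizedLoss (hW β) (hV z) Y Θ) _
  · rw [hg, ← hΘ, regularizedLoss_posteriorMean (hW β0) (hV z0), hSig]

end ExponentialParameters

/-- **Majorization property of the surrogate (6).**  With
`Σ(z,β) = e^β I + H diag(e^z) Hᴴ`,
`R(z,β) = ∑ₙ ((a₀+1) zₙ + b₀ e^{-zₙ}) + (a₀+1) β + b₀ e^{-β}`,
cost `𝓛(z,β) = L log det Σ(z,β) + tr(Yᴴ Σ(z,β)⁻¹ Y) + R(z,β) + τ ‖D z‖₁`, and,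
for fixed `(z⁰, β⁰)`, `Θ = e^{-β⁰}(e^{-β⁰} Hᴴ H + diag(e^{-z⁰}))⁻¹ Hᴴ Y` and
surrogate `g(z,β) = L log det Σ(z,β) + e^{-β} ‖Y − HΘ‖_F² + tr(Θᴴ diag(e^{-z}) Θ)
+ R(z,β) + τ ‖D z‖₁`, one has `g ≥ 𝓛` everywhere and `g(z⁰,β⁰) = 𝓛(z⁰,β⁰)`. -/
theorem surrogate_majorizes (M N L : ℕ) (hL : 0 < L)
    (a0 b0 : ℝ) (ha0 : 0 < a0) (hb0 : 0 < b0) (τ : ℝ) (hτ : 0 ≤ τ)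
    (H : Matrix (Fin M) (Fin N) ℂ) (Y : Matrix (Fin M) (Fin L) ℂ)
    (z0 : Fin N → ℝ) (β0 : ℝ) :
    let Sig : (Fin N → ℝ) → ℝ → Matrix (Fin M) (Fin M) ℂ := fun z β =>
      (Real.exp β : ℂ) • (1 : Matrix (Fin M) (Fin M) ℂ) +
        H * Matrix.diagonal (fun n => (Real.exp (z n) : ℂ)) * Hᴴ
    let R : (Fin N → ℝ) → ℝ → ℝ := fun z β =>
      (∑ n, ((a0 + 1) * z n + b0 * Real.exp (-(z n)))) +
        (a0 + 1) * β + b0 * Real.exp (-β)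
    let cost : (Fin N → ℝ) → ℝ → ℝ := fun z β =>
      L * Real.log ((Sig z β).det.re) +
        (Matrix.trace (Yᴴ * (Sig z β)⁻¹ * Y)).re + R z β + τ * tvNorm z
    let Θ : Matrix (Fin N) (Fin L) ℂ :=
      (Real.exp (-β0) : ℂ) •
        (((Real.exp (-β0) : ℂ) • (Hᴴ * H) +
          Matrix.diagonal (fun n => (Real.exp (-(z0 n)) : ℂ)))⁻¹ * (Hᴴ * Y))
    let g : (Fin N → ℝ) → ℝ → ℝ := fun z β =>
      L * Real.log ((Sig z β).det.re) +
        Real.exp (-β) * (Matrix.trace ((Y - H * Θ)ᴴ * (Y - H * Θ))).re +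
        (Matrix.trace (Θᴴ * Matrix.diagonal (fun n => (Real.exp (-(z n)) : ℂ)) * Θ)).re +
        R z β + τ * tvNorm z
    (∀ (z : Fin N → ℝ) (β : ℝ), cost z β ≤ g z β) ∧ g z0 β0 = cost z0 β0 := by
  intro Sig R cost Θ g
  obtain ⟨hle, heq⟩ := surrogate_majorizes_general H Y
    (fun z β => L * Real.log (Sig z β).det.re + R z β + τ * tvNorm z) z0 β0
  simp only [RCLike.re_eq_complex_re, RCLike.ofReal_eq_complex_ofReal] at hle heq
  exact ⟨fun z β => by linarith only [hle z β], by linarith only [heq]⟩
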